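/- arXiv:0901.2822 — 4 statements merged into one kernel-verified Lean document; each statement's English description precedes it below -/
import Mathlib

section
/- Let p ∈ ℝ³, let l ≥ 3, and let q₀, …, q_{l−1} ∈ ℝ³ (indices taken modulo l) be points such that for every i the vectors qᵢ − p and q_{i+1} − p are linearly independent. Let nᵢ := ((qᵢ − p) × (q_{i+1} − p)) / ‖(qᵢ − p) × (q_{i+1} − p)‖ denote the unit normal of the triangle with vertices p, qᵢ, q_{i+1}, and let γᵢ := ∠(qᵢ − p, q_{i+1} − p) ∈ (0, π) be the interior angle of that triangle at p. Suppose there exist a unit vector u ∈ ℝ³ and φ ∈ [0, π) such that ∠(nᵢ, u) ≤ φ for all i. Then the discrete Gauss curvature (angle defect) K_p := 2π − ∑_{i=0}^{l−1} γᵢ satisfies K_p ≤ 2π(1 − cos φ). -/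
/-- The cross product on Euclidean 3-space. -/
noncomputable def cross3 (a b : EuclideanSpace ℝ (Fin 3)) : EuclideanSpace ℝ (Fin 3) :=
  (WithLp.equiv 2 (Fin 3 → ℝ)).symm
    ![a 1 * b 2 - a 2 * b 1, a 2 * b 0 - a 0 * b 2, a 0 * b 1 - a 1 * b 0]

/-
Project the star along `u` onto the plane `uᗮ`. Since every normal lies within `φ` of `u`, where
we may assume `cos φ > 0`, each projected triangle is positively oriented at `p`, so the projected
edges wind around `p` at least once and the projected angles sum to at least `2π`. On the other
hand, let `v` run through the directions of a triangle, at unit speed, and put `c = ⟪n, u⟫`. The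
projection of `v` turns at the rate `c / (1 - ⟪v, u⟫²)`, and `⟪v, u⟫² + c² ≤ 1` because `v` and the
normal `n` are orthonormal; so this rate is at most `1 / c`, and the angle of a triangle is at least
`c ≥ cos φ` times its projection. Summing gives `2π cos φ ≤ ∑ γᵢ`.
-/

open Real InnerProductGeometry ComplexConjugate
open scoped RealInnerProductSpace Matrix

section ComplexArg

theorem hasDerivAt_arg_comp {f : ℝ → ℂ} {f' : ℂ} {t : ℝ} (hf : HasDerivAt f f' t)
    (ht : f t ∈ Complex.slitPlane) :
    HasDerivAt (fun s ↦ (f s).arg) (f' / f t).im t := by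
  simpa only [Function.comp_def, Complex.imCLM_apply, Complex.log_im] using!
    Complex.imCLM.hasFDerivAt.comp_hasDerivAt t (hf.clog_real ht)

theorem two_pi_le_sum_arg_div {ι : Type*} [Fintype ι] [Nonempty ι] (σ : Equiv.Perm ι) (z : ι → ℂ)
    (hz : ∀ i, 0 < (z (σ i) / z i).arg) : 2 * π ≤ ∑ i, (z (σ i) / z i).arg := by
  have hne (i : ι) : z (σ i) ≠ 0 ∧ z i ≠ 0 :=
    div_ne_zero_iff.1 fun h ↦ by simpa only [h, Complex.arg_zero, lt_self_iff_false] using hz i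
  have hturns : ((∑ i, (z (σ i) / z i).arg : ℝ) : Real.Angle) = 0 := by
    calc ((∑ i, (z (σ i) / z i).arg : ℝ) : Real.Angle)
        = ∑ i, ((z (σ i) / z i).arg : Real.Angle) := map_sum Real.Angle.coeHom _ _
      _ = ∑ i, (((z (σ i)).arg : Real.Angle) - (z i).arg) :=
          Finset.sum_congr rfl fun i _ ↦ Complex.arg_div_coe_angle (hne i).1 (hne i).2
      _ = 0 := by
          rw [Finset.sum_sub_distrib, Equiv.sum_comp σ fun i ↦ ((z i).arg : Real.Angle), sub_self]
  obtain ⟨n, hn⟩ := Real.Angle.coe_eq_zero_iff.1 hturns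
  have hsum : 0 < ∑ i, (z (σ i) / z i).arg :=
    Finset.sum_pos (fun i _ ↦ hz i) Finset.univ_nonempty
  rw [← hn] at hsum ⊢
  have hn_pos : 0 < n := (smul_pos_iff_of_pos_right two_pi_pos).1 hsum
  exact le_smul_of_one_le_left two_pi_pos.le hn_pos

end ComplexArg

section InnerProductSpace

variable {V : Type*} [NormedAddCommGroup V] [InnerProductSpace ℝ V] {x w : V}

theorem norm_sq_smul_add_smul (hnorm : ‖w‖ = ‖x‖) (horth : ⟪x, w⟫ = 0) (a b : ℝ) :
    ‖a • x + b • w‖ ^ 2 = (a ^ 2 + b ^ 2) * ‖x‖ ^ 2 := by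
  rw [norm_add_sq_real, real_inner_smul_left, real_inner_smul_right, horth, norm_smul, norm_smul,
    mul_pow, mul_pow, norm_eq_abs, norm_eq_abs, sq_abs, sq_abs, hnorm]
  ring

theorem exists_orthogonal_eq_smul_cos_sin {y : V} (hx : x ≠ 0) (hy : y ≠ 0)
    (hs : sin (angle x y) ≠ 0) :
    ∃ w : V, ‖w‖ = ‖x‖ ∧ ⟪x, w⟫ = 0 ∧
      (‖y‖ / ‖x‖) • (cos (angle x y) • x + sin (angle x y) • w) = y := by
  have hxn : ‖x‖ ≠ 0 := norm_ne_zero_iff.2 hx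
  have hyn : ‖y‖ ≠ 0 := norm_ne_zero_iff.2 hy
  have hxy : ⟪x, y⟫ = cos (angle x y) * (‖x‖ * ‖y‖) :=
    (cos_angle_mul_norm_mul_norm x y).symm
  set γ := angle x y
  refine ⟨(sin γ)⁻¹ • ((‖x‖ / ‖y‖) • y - cos γ • x), ?_, ?_, ?_⟩
  · rw [← sq_eq_sq₀ (norm_nonneg _) (norm_nonneg _), norm_smul, mul_pow, norm_sub_sq_real,
      real_inner_smul_left, real_inner_smul_right, real_inner_comm, hxy, norm_smul, norm_smul]
    simp only [norm_eq_abs, mul_pow, sq_abs, div_pow, inv_pow]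
    field_simp
    linear_combination -(sin_sq_add_cos_sq γ)
  · rw [real_inner_smul_right, inner_sub_right, real_inner_smul_right, real_inner_smul_right, hxy,
      real_inner_self_eq_norm_sq]
    field_simp
    ring
  · rw [smul_inv_smul₀ hs, add_sub_cancel, smul_smul, div_mul_div_cancel₀ hxn, div_self hyn,
      one_smul]

end InnerProductSpace

section CrossProduct

variable (x y : EuclideanSpace ℝ (Fin 3))

theorem cross3_eq_toLp_crossProduct : cross3 x y = WithLp.toLp 2 (x.ofLp ⨯₃ y.ofLp) := rfl

theorem norm_cross3 : ‖cross3 x y‖ = ‖x‖ * ‖y‖ * sin (angle x y) :=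
  norm_ofLp_crossProduct x y

theorem cross3_add_right (z : EuclideanSpace ℝ (Fin 3)) :
    cross3 x (y + z) = cross3 x y + cross3 x z := by
  simp only [cross3_eq_toLp_crossProduct, WithLp.ofLp_add, map_add, WithLp.toLp_add]

theorem cross3_smul_right (r : ℝ) : cross3 x (r • y) = r • cross3 x y := by
  simp only [cross3_eq_toLp_crossProduct, WithLp.ofLp_smul, map_smul, WithLp.toLp_smul]

theorem cross3_self : cross3 x x = 0 := by
  simp only [cross3_eq_toLp_crossProduct, cross_self, WithLp.toLp_zero]

theorem cross3_smul_add_smul (a b c d : ℝ) :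
    cross3 (a • x + b • y) (c • x + d • y) = (a * d - b * c) • cross3 x y := by
  ext i
  fin_cases i <;> simp [cross3] <;> ring

theorem cross3_rotate (t : ℝ) :
    cross3 (cos t • x + sin t • y) (-sin t • x + cos t • y) = cross3 x y := by
  rw [cross3_smul_add_smul, ← sq, mul_neg, sub_neg_eq_add, ← sq, cos_sq_add_sin_sq, one_smul]

variable {x y}

theorem cross3_ne_zero_of_linearIndependent (h : LinearIndependent ℝ ![x, y]) :
    cross3 x y ≠ 0 := by
  have hcoord : LinearIndependent ℝ ![x.ofLp, y.ofLp] :=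
    LinearIndependent.pair_iff.2 fun a b hab ↦
      LinearIndependent.pair_iff.1 h a b (WithLp.ofLp_injective 2 hab)
  simpa only [cross3_eq_toLp_crossProduct, ne_eq, WithLp.toLp_eq_zero] using
    crossProduct_ne_zero_iff_linearIndependent.2 hcoord

end CrossProduct

section ProjKahler

/-- The Kähler form of the oriented plane `uᗮ`, pulled back along the orthogonal projection onto
it, for a unit vector `u`: its argument at `x`, `y` is the oriented angle from the projection of `x`
to that of `y`. It is `Orientation.kahler` of the projections, written without projecting. -/
noncomputable def projKahler (u x : EuclideanSpace ℝ (Fin 3)) :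
    EuclideanSpace ℝ (Fin 3) →ₗ[ℝ] ℂ where
  toFun y := ⟨⟪x, y⟫ - ⟪x, u⟫ * ⟪y, u⟫, ⟪cross3 x y, u⟫⟩
  map_add' y z := by
    apply Complex.ext
    · simp only [inner_add_right, inner_add_left, Complex.add_re]
      ring
    · simp only [cross3_add_right, inner_add_left, Complex.add_im]
  map_smul' r y := by
    apply Complex.ext
    · simp only [real_inner_smul_right, real_inner_smul_left, RingHom.id_apply, Complex.smul_re,
        smul_eq_mul]
      ring
    · simp only [cross3_smul_right, real_inner_smul_left, RingHom.id_apply, Complex.smul_im,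
        smul_eq_mul]

variable {u : EuclideanSpace ℝ (Fin 3)} (x y a : EuclideanSpace ℝ (Fin 3))

theorem projKahler_re : (projKahler u x y).re = ⟪x, y⟫ - ⟪x, u⟫ * ⟪y, u⟫ := rfl

theorem projKahler_im : (projKahler u x y).im = ⟪cross3 x y, u⟫ := rfl

theorem ofReal_re_projKahler_self : ((projKahler u x x).re : ℂ) = projKahler u x x := by
  refine Complex.ext rfl ?_
  rw [projKahler_im, cross3_self, inner_zero_left, Complex.ofReal_im]

theorem re_projKahler_self_le : (projKahler u x x).re ≤ ‖x‖ ^ 2 := by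
  rw [projKahler_re, real_inner_self_eq_norm_sq]
  exact sub_le_self _ (mul_self_nonneg _)

theorem re_projKahler_self_nonneg (hu : ‖u‖ = 1) : 0 ≤ (projKahler u x x).re := by
  have := real_inner_mul_inner_self_le x u
  rw [projKahler_re, sub_nonneg]
  rwa [real_inner_self_eq_norm_sq u, hu, one_pow, mul_one] at this

theorem conj_projKahler_mul_projKahler (hu : ‖u‖ = 1) :
    conj (projKahler u a x) * projKahler u a y = projKahler u a a * projKahler u x y := by
  have hinner (v w : EuclideanSpace ℝ (Fin 3)) : ⟪v, w⟫ = v 0 * w 0 + v 1 * w 1 + v 2 * w 2 := by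
    simp only [PiLp.inner_apply, Fin.sum_univ_three, RCLike.inner_apply, conj_trivial, mul_comm]
  have hcross (v w : EuclideanSpace ℝ (Fin 3)) :
      ⟪cross3 v w, u⟫ = (v 1 * w 2 - v 2 * w 1) * u 0 + (v 2 * w 0 - v 0 * w 2) * u 1 +
        (v 0 * w 1 - v 1 * w 0) * u 2 := hinner _ _
  have hunit : u 0 * u 0 + u 1 * u 1 + u 2 * u 2 = 1 := by
    rw [← hinner, real_inner_self_eq_norm_sq, hu, one_pow]
  rw [← ofReal_re_projKahler_self a]
  apply Complex.ext <;>
    simp only [Complex.mul_re, Complex.mul_im, Complex.conj_re, Complex.conj_im, Complex.ofReal_re,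
      Complex.ofReal_im, projKahler_re, projKahler_im, hcross, hinner]
  · -- The coefficient is `⟪a × x, a × y⟫`.
    linear_combination ((a 0 * a 0 + a 1 * a 1 + a 2 * a 2) * (x 0 * y 0 + x 1 * y 1 + x 2 * y 2)
      - (a 0 * x 0 + a 1 * x 1 + a 2 * x 2) * (a 0 * y 0 + a 1 * y 1 + a 2 * y 2)) * hunit
  · linear_combination -1 * ((a 0 * x 0 + a 1 * x 1 + a 2 * x 2) *
      ((a 1 * y 2 - a 2 * y 1) * u 0 + (a 2 * y 0 - a 0 * y 2) * u 1 +
        (a 0 * y 1 - a 1 * y 0) * u 2) -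
      (a 0 * y 0 + a 1 * y 1 + a 2 * y 2) *
      ((a 1 * x 2 - a 2 * x 1) * u 0 + (a 2 * x 0 - a 0 * x 2) * u 1 +
        (a 0 * x 1 - a 1 * x 0) * u 2) -
      (a 0 * a 0 + a 1 * a 1 + a 2 * a 2) *
      ((x 1 * y 2 - x 2 * y 1) * u 0 + (x 2 * y 0 - x 0 * y 2) * u 1 +
        (x 0 * y 1 - x 1 * y 0) * u 2)) * hunit

theorem normSq_projKahler (hu : ‖u‖ = 1) :
    Complex.normSq (projKahler u x y) = (projKahler u x x).re * (projKahler u y y).re := by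
  rw [← Complex.ofReal_inj, Complex.normSq_eq_conj_mul_self, Complex.ofReal_mul,
    ofReal_re_projKahler_self, ofReal_re_projKahler_self,
    conj_projKahler_mul_projKahler y y x hu]

theorem inner_cross3_sq_le (hu : ‖u‖ = 1) :
    ⟪cross3 x y, u⟫ ^ 2 ≤ (projKahler u x x).re * ‖y‖ ^ 2 := by
  calc ⟪cross3 x y, u⟫ ^ 2
      ≤ Complex.normSq (projKahler u x y) := by
        rw [sq]; exact Complex.im_sq_le_normSq (projKahler u x y)
    _ = (projKahler u x x).re * (projKahler u y y).re := normSq_projKahler x y hu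
    _ ≤ (projKahler u x x).re * ‖y‖ ^ 2 :=
        mul_le_mul_of_nonneg_left (re_projKahler_self_le y) (re_projKahler_self_nonneg x hu)

variable {x y a}

theorem projKahler_ne_zero_iff (hu : ‖u‖ = 1) :
    projKahler u x y ≠ 0 ↔ 0 < (projKahler u x x).re ∧ 0 < (projKahler u y y).re := by
  rw [← Complex.normSq_pos, normSq_projKahler x y hu]
  refine ⟨fun h ↦ ⟨?_, ?_⟩, fun h ↦ mul_pos h.1 h.2⟩
  · exact pos_of_mul_pos_left h (re_projKahler_self_nonneg y hu)
  · exact pos_of_mul_pos_right h (re_projKahler_self_nonneg x hu)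

theorem projKahler_div_projKahler (hu : ‖u‖ = 1) (h : projKahler u a x ≠ 0) :
    projKahler u a y / projKahler u a x = projKahler u x y / (projKahler u x x).re := by
  obtain ⟨ha, hx⟩ := (projKahler_ne_zero_iff hu).1 h
  have ha' : projKahler u a a ≠ 0 := (projKahler_ne_zero_iff hu).2 ⟨ha, ha⟩
  have hx' : projKahler u x x ≠ 0 := (projKahler_ne_zero_iff hu).2 ⟨hx, hx⟩
  rw [ofReal_re_projKahler_self, div_eq_div_iff h hx']
  apply mul_left_cancel₀ ha'
  linear_combination projKahler u a x * conj_projKahler_mul_projKahler x y a hu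
    - projKahler u a y * conj_projKahler_mul_projKahler x x a hu

theorem two_pi_le_sum_arg_projKahler {ι : Type*} [Fintype ι] [Nonempty ι] (σ : Equiv.Perm ι)
    (v : ι → EuclideanSpace ℝ (Fin 3)) (hu : ‖u‖ = 1) (hv : ∀ i, 0 < ⟪cross3 (v i) (v (σ i)), u⟫) :
    2 * π ≤ ∑ i, (projKahler u (v i) (v (σ i))).arg := by
  have hne (i : ι) : projKahler u (v i) (v (σ i)) ≠ 0 := fun h ↦ (hv i).ne' (congrArg Complex.im h)
  have hself (i : ι) : 0 < (projKahler u (v i) (v i)).re :=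
    ((projKahler_ne_zero_iff hu).1 (hne i)).1
  -- Up to scaling, `z i` is the projection of `v i` to `uᗮ ≃ ℂ`, with real axis along that of `a`.
  let a := v (Classical.arbitrary ι)
  let z (i : ι) : ℂ := projKahler u a (v i)
  have harg (i : ι) : (z (σ i) / z i).arg = (projKahler u (v i) (v (σ i))).arg := by
    rw [projKahler_div_projKahler hu ((projKahler_ne_zero_iff hu).2 ⟨hself _, hself i⟩),
      div_eq_mul_inv, ← Complex.ofReal_inv, Complex.arg_mul_real (inv_pos.2 (hself i))]
  have hpos (i : ι) : 0 < (z (σ i) / z i).arg := by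
    rw [harg]
    exact (Complex.arg_nonneg_iff.2 (hv i).le).lt_of_ne' fun h ↦
      (hv i).ne' (Complex.arg_eq_zero_iff.1 h).2
  simpa only [harg] using two_pi_le_sum_arg_div σ z hpos

end ProjKahler

section AngleComparison

variable {u x w : EuclideanSpace ℝ (Fin 3)}

theorem projKahler_mem_slitPlane (hu : ‖u‖ = 1) (hpos : 0 < ⟪cross3 x w, u⟫) {t : ℝ}
    (ht : t ∈ Set.Ico 0 π) : projKahler u x (cos t • x + sin t • w) ∈ Complex.slitPlane := by
  rcases ht.1.eq_or_lt with rfl | ht0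
  · have hne : projKahler u x w ≠ 0 := fun h ↦ hpos.ne' (congrArg Complex.im h)
    left
    simpa only [cos_zero, sin_zero, one_smul, zero_smul, add_zero] using
      ((projKahler_ne_zero_iff hu).1 hne).1
  · right
    have hcross : cross3 x (cos t • x + sin t • w) = sin t • cross3 x w := by
      rw [cross3_add_right, cross3_smul_right, cross3_smul_right, cross3_self, smul_zero, zero_add]
    rw [projKahler_im, hcross, real_inner_smul_left]
    exact (mul_pos (sin_pos_of_pos_of_lt_pi ht0 ht.2) hpos).ne'

theorem hasDerivAt_arg_projKahler (hu : ‖u‖ = 1) {t : ℝ}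
    (ht : projKahler u x (cos t • x + sin t • w) ∈ Complex.slitPlane) :
    HasDerivAt (fun s ↦ (projKahler u x (cos s • x + sin s • w)).arg)
      (⟪cross3 x w, u⟫ / (projKahler u (cos t • x + sin t • w) (cos t • x + sin t • w)).re) t := by
  have hpath : HasDerivAt (fun s ↦ cos s • x + sin s • w) (-sin t • x + cos t • w) t :=
    ((hasDerivAt_cos t).smul_const x).add ((hasDerivAt_sin t).smul_const w)
  have hproj : HasDerivAt (fun s ↦ projKahler u x (cos s • x + sin s • w))
      (projKahler u x (-sin t • x + cos t • w)) t :=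
    (projKahler u x).toContinuousLinearMap.hasFDerivAt.comp_hasDerivAt t hpath
  convert hasDerivAt_arg_comp hproj ht using 1
  rw [projKahler_div_projKahler hu (Complex.slitPlane_ne_zero ht), Complex.div_ofReal_im,
    projKahler_im, cross3_rotate]

theorem cos_angle_mul_inner_cross3_le (hu : ‖u‖ = 1) (hnorm : ‖w‖ = ‖x‖) (horth : ⟪x, w⟫ = 0)
    (t : ℝ) :
    cos (angle (cross3 x w) u) * ⟪cross3 x w, u⟫ ≤
      (projKahler u (cos t • x + sin t • w) (cos t • x + sin t • w)).re := by
  set v := cos t • x + sin t • w with hv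
  have hnormal : ‖cross3 x w‖ = ‖x‖ ^ 2 := by
    rw [norm_cross3, inner_eq_zero_iff_angle_eq_pi_div_two x w |>.1 horth, sin_pi_div_two, mul_one,
      hnorm, sq]
  have hbound : ⟪cross3 x w, u⟫ ^ 2 ≤ (projKahler u v v).re * ‖x‖ ^ 2 := by
    have h := inner_cross3_sq_le v (-sin t • x + cos t • w) hu
    rwa [hv, cross3_rotate, norm_sq_smul_add_smul hnorm horth, neg_sq, sin_sq_add_cos_sq, one_mul]
      at h
  rcases (sq_nonneg ‖x‖).eq_or_lt with hx | hx
  · rw [norm_eq_zero.1 (hnormal.trans hx.symm), inner_zero_left, mul_zero]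
    exact re_projKahler_self_nonneg v hu
  · rw [cos_angle, hu, mul_one, hnormal, div_mul_eq_mul_div, div_le_iff₀ hx, ← sq]
    exact hbound

theorem cos_angle_mul_arg_projKahler_le (hu : ‖u‖ = 1) (hnorm : ‖w‖ = ‖x‖) (horth : ⟪x, w⟫ = 0)
    (hpos : 0 < ⟪cross3 x w, u⟫) {t : ℝ} (ht : t ∈ Set.Ico 0 π) :
    cos (angle (cross3 x w) u) * (projKahler u x (cos t • x + sin t • w)).arg ≤ t := by
  let v (s : ℝ) := cos s • x + sin s • w
  let f (s : ℝ) := cos (angle (cross3 x w) u) * (projKahler u x (v s)).arg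
  have hderiv {s : ℝ} (hs : s ∈ Set.Icc 0 t) : HasDerivAt f
      (cos (angle (cross3 x w) u) * (⟪cross3 x w, u⟫ / (projKahler u (v s) (v s)).re)) s :=
    (hasDerivAt_arg_projKahler hu
      (projKahler_mem_slitPlane hu hpos ⟨hs.1, hs.2.trans_lt ht.2⟩)).const_mul _
  have hrate (s : ℝ) (hs : s ∈ interior (Set.Icc 0 t)) : deriv f s ≤ 1 := by
    rw [(hderiv (interior_subset hs)).deriv, ← mul_div_assoc]
    exact div_le_one_of_le₀ (cos_angle_mul_inner_cross3_le hu hnorm horth s)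
      (re_projKahler_self_nonneg _ hu)
  have hstart : f 0 = 0 := by
    simp only [f, v, cos_zero, sin_zero, one_smul, zero_smul, add_zero]
    rw [← ofReal_re_projKahler_self,
      Complex.arg_ofReal_of_nonneg (re_projKahler_self_nonneg x hu), mul_zero]
  have hgrowth : f t - f 0 ≤ 1 * (t - 0) :=
    (convex_Icc 0 t).image_sub_le_mul_sub_of_deriv_le
      (fun s hs ↦ (hderiv hs).continuousAt.continuousWithinAt)
      (fun s hs ↦ (hderiv (interior_subset hs)).differentiableAt.differentiableWithinAt) hrate
      0 (Set.left_mem_Icc.2 ht.1) t (Set.right_mem_Icc.2 ht.1) ht.1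
  simpa only [hstart, sub_zero, one_mul] using hgrowth

theorem cos_angle_mul_arg_projKahler_le_angle {y : EuclideanSpace ℝ (Fin 3)} (hu : ‖u‖ = 1)
    (hpos : 0 < ⟪cross3 x y, u⟫) :
    cos (angle (cross3 x y) u) * (projKahler u x y).arg ≤ angle x y := by
  have hnormal : ‖x‖ * ‖y‖ * sin (angle x y) ≠ 0 := by
    rw [← norm_cross3, norm_ne_zero_iff]
    exact fun h ↦ hpos.ne' (by rw [h, inner_zero_left])
  obtain ⟨⟨hx, hy⟩, hsin⟩ : (‖x‖ ≠ 0 ∧ ‖y‖ ≠ 0) ∧ sin (angle x y) ≠ 0 := by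
    simpa only [mul_ne_zero_iff] using hnormal
  obtain ⟨w, hnorm, horth, hw⟩ :=
    exists_orthogonal_eq_smul_cos_sin (norm_ne_zero_iff.1 hx) (norm_ne_zero_iff.1 hy) hsin
  set γ := angle x y
  set r := ‖y‖ / ‖x‖
  have hr : 0 < r := div_pos (hy.symm.lt_of_le (norm_nonneg y)) (hx.symm.lt_of_le (norm_nonneg x))
  have hγ : γ ∈ Set.Ico 0 π := ⟨angle_nonneg x y, (angle_le_pi x y).lt_of_ne fun h ↦
    hsin ((congrArg sin h).trans sin_pi)⟩
  have hscale : 0 < r * sin γ :=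
    mul_pos hr (hsin.symm.lt_of_le (sin_angle_nonneg x y))
  have hcross : cross3 x y = (r * sin γ) • cross3 x w := by
    rw [← hw, cross3_smul_right, cross3_add_right, cross3_smul_right, cross3_smul_right,
      cross3_self, smul_zero, zero_add, smul_smul]
  have harg : (projKahler u x y).arg = (projKahler u x (cos γ • x + sin γ • w)).arg := by
    rw [← hw, map_smul, Complex.real_smul, Complex.arg_real_mul _ hr]
  rw [hcross, real_inner_smul_left] at hpos
  rw [harg, hcross, angle_smul_left_of_pos _ _ hscale]
  exact cos_angle_mul_arg_projKahler_le hu hnorm horth (pos_of_mul_pos_right hpos hscale.le) hγ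

end AngleComparison

theorem gauss_curvature_bound_general {ι : Type*} [Fintype ι] [Nonempty ι] (σ : Equiv.Perm ι)
    (p : EuclideanSpace ℝ (Fin 3)) (q : ι → EuclideanSpace ℝ (Fin 3))
    (hind : ∀ i, LinearIndependent ℝ ![q i - p, q (σ i) - p])
    (u : EuclideanSpace ℝ (Fin 3)) (hu : ‖u‖ = 1) (φ : ℝ) (hφ : φ ≤ π)
    (hangle : ∀ i, angle
      ((‖cross3 (q i - p) (q (σ i) - p)‖)⁻¹ • cross3 (q i - p) (q (σ i) - p)) u ≤ φ) :
    2 * π - ∑ i, angle (q i - p) (q (σ i) - p) ≤ 2 * π * (1 - cos φ) := by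
  suffices h : 2 * π * cos φ ≤ ∑ i, angle (q i - p) (q (σ i) - p) by linarith
  rcases le_or_gt (cos φ) 0 with hcos | hcos
  · exact (mul_nonpos_of_nonneg_of_nonpos two_pi_pos.le hcos).trans
      (Finset.sum_nonneg fun i _ ↦ angle_nonneg _ _)
  have hcos_le (i : ι) : cos φ ≤ cos (angle (cross3 (q i - p) (q (σ i) - p)) u) := by
    have hnormal := cross3_ne_zero_of_linearIndependent (hind i)
    rw [← angle_smul_left_of_pos _ _ (inv_pos.2 (norm_pos_iff.2 hnormal))]
    exact cos_le_cos_of_nonneg_of_le_pi (angle_nonneg _ _) hφ (hangle i)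
  have hpos (i : ι) : 0 < ⟪cross3 (q i - p) (q (σ i) - p), u⟫ := by
    have hnormal := cross3_ne_zero_of_linearIndependent (hind i)
    rw [← cos_angle_mul_norm_mul_norm, hu, mul_one]
    exact mul_pos (hcos.trans_le (hcos_le i)) (norm_pos_iff.2 hnormal)
  calc 2 * π * cos φ
      ≤ (∑ i, (projKahler u (q i - p) (q (σ i) - p)).arg) * cos φ :=
        mul_le_mul_of_nonneg_right (two_pi_le_sum_arg_projKahler σ (q · - p) hu hpos) hcos.le
    _ = ∑ i, cos φ * (projKahler u (q i - p) (q (σ i) - p)).arg := by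
        rw [mul_comm, Finset.mul_sum]
    _ ≤ ∑ i, angle (q i - p) (q (σ i) - p) := Finset.sum_le_sum fun i _ ↦
        (mul_le_mul_of_nonneg_right (hcos_le i) (Complex.arg_nonneg_iff.2 (hpos i).le)).trans
          (cos_angle_mul_arg_projKahler_le_angle hu (hpos i))

/-- If the unit normals `nᵢ` of the triangles `(p, qᵢ, q_{i+1})` of a
vertex star all make an angle at most `φ < π` with a fixed unit direction `u`, then the
angle defect `2π − ∑ γᵢ` at `p` is at most `2π(1 − cos φ)`. -/
theorem gauss_curvature_bound (l : ℕ) (hl : 3 ≤ l) [NeZero l]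
    (p : EuclideanSpace ℝ (Fin 3)) (q : ZMod l → EuclideanSpace ℝ (Fin 3))
    (hind : ∀ i : ZMod l, LinearIndependent ℝ ![q i - p, q (i + 1) - p])
    (u : EuclideanSpace ℝ (Fin 3)) (hu : ‖u‖ = 1)
    (φ : ℝ) (hφ0 : 0 ≤ φ) (hφπ : φ < Real.pi)
    (hangle : ∀ i : ZMod l,
      InnerProductGeometry.angle
        ((‖cross3 (q i - p) (q (i + 1) - p)‖)⁻¹ • cross3 (q i - p) (q (i + 1) - p)) u ≤ φ) :
    2 * Real.pi - ∑ i : ZMod l, InnerProductGeometry.angle (q i - p) (q (i + 1) - p)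
      ≤ 2 * Real.pi * (1 - Real.cos φ) :=
  gauss_curvature_bound_general (Equiv.addRight 1) p q hind u hu φ hφπ.le hangle
end

section
/- Let ρ ≥ 1 and let e, f ∈ ℝ³ be nonzero vectors with ‖f‖ ≤ ρ‖e‖ and ‖e‖·‖f‖ ≤ ρ‖e × f‖ (in particular e and f are linearly independent, so e ≠ f). Then ‖(f − e) × f‖ ≥ ‖f − e‖·‖f‖ / (2ρ²); equivalently, the angle α := ∠(f − e, f), which is the angle opposite the edge e at the vertex f in the triangle with vertices 0, e, f, satisfies sin α ≥ 1/(2ρ²). -/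
/-! The pairs `(e, f)` and `(f - e, f)` span parallelograms of the same area, because an alternating
map satisfies `B (f - e) f = -B e f`. Passing from `e` to `f - e` thus changes only the product of
the side lengths, by a factor of at most `1 + ρ ≤ 2 * ρ`. -/

section AlternatingBilinear

variable {R E F : Type*} [CommSemiring R] [SeminormedAddCommGroup E] [Module R E]
  [SeminormedAddCommGroup F] [Module R F] {B : E →ₗ[R] E →ₗ[R] F}

theorem norm_map_sub_self_left (hB : B.IsAlt) (e f : E) : ‖B (f - e) f‖ = ‖B e f‖ := by
  rw [map_sub, LinearMap.sub_apply, hB.self_eq_zero, zero_sub, norm_neg]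

theorem norm_sub_le_one_add_mul_norm {σ : ℝ} {e f : E} (hlen : ‖f‖ ≤ σ * ‖e‖) :
    ‖f - e‖ ≤ (1 + σ) * ‖e‖ := by
  linarith [norm_sub_le f e]

theorem norm_sub_mul_norm_le_norm_map_sub (hB : B.IsAlt) {σ ρ : ℝ} (hσ : 0 ≤ σ) {e f : E}
    (hlen : ‖f‖ ≤ σ * ‖e‖) (hreg : ‖e‖ * ‖f‖ ≤ ρ * ‖B e f‖) :
    ‖f - e‖ * ‖f‖ ≤ (1 + σ) * ρ * ‖B (f - e) f‖ :=
  calc ‖f - e‖ * ‖f‖ ≤ (1 + σ) * ‖e‖ * ‖f‖ := by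
        gcongr
        exact norm_sub_le_one_add_mul_norm hlen
    _ = (1 + σ) * (‖e‖ * ‖f‖) := mul_assoc ..
    _ ≤ (1 + σ) * (ρ * ‖B e f‖) := by gcongr
    _ = (1 + σ) * ρ * ‖B (f - e) f‖ := by rw [norm_map_sub_self_left hB, mul_assoc]

theorem opposite_angle_sine_bound_general (hB : B.IsAlt) {ρ : ℝ} (hρ : 1 ≤ ρ) {e f : E}
    (hlen : ‖f‖ ≤ ρ * ‖e‖) (hreg : ‖e‖ * ‖f‖ ≤ ρ * ‖B e f‖) :
    ‖f - e‖ * ‖f‖ / (2 * ρ ^ 2) ≤ ‖B (f - e) f‖ := by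
  have hconst : (1 + ρ) * ρ ≤ 2 * ρ ^ 2 := by nlinarith
  rw [div_le_iff₀' (by positivity)]
  calc ‖f - e‖ * ‖f‖ ≤ (1 + ρ) * ρ * ‖B (f - e) f‖ :=
        norm_sub_mul_norm_le_norm_map_sub hB (by positivity) hlen hreg
    _ ≤ 2 * ρ ^ 2 * ‖B (f - e) f‖ := by gcongr

end AlternatingBilinear

/-- The cross product `cross3` bundled as a bilinear map, obtained by transporting Mathlib's
`crossProduct` on `Fin 3 → ℝ` to Euclidean space. -/
noncomputable def cross3Bilin :
    EuclideanSpace ℝ (Fin 3) →ₗ[ℝ] EuclideanSpace ℝ (Fin 3) →ₗ[ℝ] EuclideanSpace ℝ (Fin 3) :=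
  let ofLp := (WithLp.linearEquiv 2 ℝ (Fin 3 → ℝ)).toLinearMap
  (crossProduct.compl₁₂ ofLp ofLp).compr₂ (WithLp.linearEquiv 2 ℝ (Fin 3 → ℝ)).symm.toLinearMap

theorem cross3Bilin_apply (a b : EuclideanSpace ℝ (Fin 3)) : cross3Bilin a b = cross3 a b :=
  rfl

theorem isAlt_cross3Bilin : cross3Bilin.IsAlt := fun a ↦
  congrArg (WithLp.toLp 2) (cross_self a.ofLp)

/-- Shape regularity bounds the sine of the angle opposite the
edge `e` at the vertex `f` from below by `1/(2ρ²)`: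
`‖(f − e) × f‖ ≥ ‖f − e‖·‖f‖/(2ρ²)`. -/
theorem opposite_angle_sine_bound (ρ : ℝ) (hρ : 1 ≤ ρ)
    (e f : EuclideanSpace ℝ (Fin 3)) (he : e ≠ 0) (hf : f ≠ 0)
    (hlen : ‖f‖ ≤ ρ * ‖e‖) (hreg : ‖e‖ * ‖f‖ ≤ ρ * ‖cross3 e f‖) :
    ‖f - e‖ * ‖f‖ / (2 * ρ ^ 2) ≤ ‖cross3 (f - e) f‖ := by
  simp only [← cross3Bilin_apply] at hreg ⊢
  exact opposite_angle_sine_bound_general isAlt_cross3Bilin hρ hlen hreg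
end

section
/- Let δ > 0 and let α, β ∈ (0, π) be angles with α ≥ δ, β ≥ δ, and α + β ≤ π − δ. Then cot α + cot β ≥ sin δ. -/
/-!
The identity `cot x + cot y = sin (x + y) / (sin x * sin y)` bounds `cot x + cot y` below by
`sin (x + y)`, because the denominator is at most `1`. Since `cot` decreases on `(0, π)`, enlarging
`β` until `α + β = π - δ` only decreases `cot α + cot β`, and then `sin (α + β) = sin δ`.
-/

open Real Set

section Cotangent

variable {x y : ℝ}

theorem cot_add_cot (hx : sin x ≠ 0) (hy : sin y ≠ 0) :
    cot x + cot y = sin (x + y) / (sin x * sin y) := by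
  rw [cot_eq_cos_div_sin, cot_eq_cos_div_sin, div_add_div _ _ hx hy, sin_add, add_comm]

theorem cot_sub_cot (hx : sin x ≠ 0) (hy : sin y ≠ 0) :
    cot x - cot y = sin (y - x) / (sin x * sin y) := by
  rw [cot_eq_cos_div_sin, cot_eq_cos_div_sin, div_sub_div _ _ hx hy, sin_sub]
  ring

theorem strictAntiOn_cot : StrictAntiOn cot (Ioo 0 π) := by
  intro x hx y hy hxy
  have hsinx : 0 < sin x := sin_pos_of_mem_Ioo hx
  have hsiny : 0 < sin y := sin_pos_of_mem_Ioo hy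
  have hsin_sub : 0 < sin (y - x) :=
    sin_pos_of_pos_of_lt_pi (sub_pos.2 hxy) (by linarith [hx.1, hy.2])
  rw [← sub_pos, cot_sub_cot hsinx.ne' hsiny.ne']
  positivity

theorem sin_add_le_cot_add_cot (hx : 0 < x) (hy : 0 < y) (hxy : x + y ≤ π) :
    sin (x + y) ≤ cot x + cot y := by
  have hsinx : 0 < sin x := sin_pos_of_pos_of_lt_pi hx (by linarith)
  have hsiny : 0 < sin y := sin_pos_of_pos_of_lt_pi hy (by linarith)
  have hsin_add : 0 ≤ sin (x + y) := sin_nonneg_of_nonneg_of_le_pi (by positivity) hxy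
  have hprod : sin x * sin y ≤ 1 := mul_le_one₀ (sin_le_one x) hsiny.le (sin_le_one y)
  rw [cot_add_cot hsinx.ne' hsiny.ne']
  exact le_div_self hsin_add (mul_pos hsinx hsiny) hprod

end Cotangent

theorem cot_add_cot_ge_sin_general {δ α β : ℝ} (hδ : 0 ≤ δ) (hα : 0 < α) (hβ : 0 < β)
    (hsum : α + β ≤ π - δ) : sin δ ≤ cot α + cot β := by
  have hβ_le : β ≤ π - δ - α := by linarith
  have hcot : cot (π - δ - α) ≤ cot β :=
    strictAntiOn_cot.antitoneOn ⟨hβ, by linarith⟩ ⟨by linarith, by linarith⟩ hβ_le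
  calc
    sin δ = sin (α + (π - δ - α)) := by rw [add_sub_cancel, sin_pi_sub]
    _ ≤ cot α + cot (π - δ - α) :=
      sin_add_le_cot_add_cot hα (hβ.trans_le hβ_le) (by linarith)
    _ ≤ cot α + cot β := by gcongr

/-- For a δ-Delaunay pair of angles `α, β ∈ (0, π)` with `α ≥ δ`,
`β ≥ δ` and `α + β ≤ π − δ`, one has `cot α + cot β ≥ sin δ`. -/
theorem cot_add_cot_ge_sin (δ α β : ℝ) (hδ : 0 < δ)
    (hα0 : 0 < α) (hαπ : α < Real.pi) (hβ0 : 0 < β) (hβπ : β < Real.pi)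
    (hαδ : δ ≤ α) (hβδ : δ ≤ β) (hsum : α + β ≤ Real.pi - δ) :
    Real.sin δ ≤ Real.cot α + Real.cot β :=
  cot_add_cot_ge_sin_general hδ.le hα0 hβ0 hsum
end

section
/- Let K > 0 and ε > 0, and let h : ℝ² → ℝ be twice continuously differentiable on the closed ball B̄(0, ε) with h(0) = 0 and Dh(0) = 0. Suppose that for every x ∈ B̄(0, ε) one has ‖Dh(x)‖ ≤ tan(1/2), and for every unit vector v ∈ ℝ², |D²h(x)(v, v)| ≤ K·(1 + ‖Dh(x)‖²)^{3/2}. Then |h(x)| ≤ K‖x‖² for all x ∈ B̄(0, ε). -/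
/-!
Restricted to the segment from `0` to `x`, the function `h` vanishes to first order at `0`, so
Taylor's formula bounds `|h x|` by half the supremum of `|D²h(x, x)|`. Writing `tan θ` for the
gradient bound, the curvature hypothesis bounds that second derivative by `K sec³ θ ‖x‖²`, and
`sec³ (1/2) ≤ (8/7)³ < 2`.
-/

open Set AffineMap

section

variable {E F : Type*} [NormedAddCommGroup E] [NormedSpace ℝ E]
  [NormedAddCommGroup F] [NormedSpace ℝ F]

theorem norm_taylor_one_remainder_le_of_norm_second_deriv_le {g g' g'' : ℝ → F} {a b C : ℝ}
    (hg : ∀ t ∈ Icc a b, HasDerivWithinAt g (g' t) (Icc a b) t)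
    (hg' : ∀ t ∈ Icc a b, HasDerivWithinAt g' (g'' t) (Icc a b) t)
    (bound : ∀ t ∈ Ico a b, ‖g'' t‖ ≤ C) :
    ∀ t ∈ Icc a b, ‖g t - g a - (t - a) • g' a‖ ≤ C / 2 * (t - a) ^ 2 := by
  have deriv_increment : ∀ t ∈ Icc a b, ‖g' t - g' a‖ ≤ C * (t - a) :=
    norm_image_sub_le_of_norm_deriv_le_segment' hg' bound
  have hr : ∀ t ∈ Icc a b, HasDerivWithinAt (fun t ↦ g t - g a - (t - a) • g' a)
      (g' t - g' a) (Icc a b) t := fun t ht ↦ by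
    simpa using! ((hg t ht).sub_const (g a)).sub
      (((hasDerivWithinAt_id t _).sub_const a).smul_const (g' a))
  have hB : ∀ t, HasDerivAt (fun t ↦ C / 2 * (t - a) ^ 2) (C * (t - a)) t := fun t ↦
    ((((hasDerivAt_id t).sub_const a).pow 2).const_mul (C / 2)).congr_deriv (by simp; ring)
  exact image_norm_le_of_norm_deriv_right_le_deriv_boundary
    (fun t ht ↦ (hr t ht).continuousWithinAt)
    (fun t ht ↦ (hr t (Ico_subset_Icc_self ht)).mono_of_mem_nhdsWithin
      (Icc_mem_nhdsGE_of_mem ht))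
    (by simp) hB (fun t ht ↦ deriv_increment t (Ico_subset_Icc_self ht))

variable {s : Set E} {f : E → F} {a x : E}

theorem mapsTo_lineMap_of_starConvex (hs : StarConvex ℝ a s) (hx : x ∈ s) :
    MapsTo (lineMap a x : ℝ → E) (Icc 0 1) s :=
  fun _ ht ↦ hs.segment_subset hx (lineMap_mem_segment ℝ a x ht)

theorem hasDerivWithinAt_comp_lineMap (hs : StarConvex ℝ a s) (hf : DifferentiableOn ℝ f s)
    (hx : x ∈ s) {t : ℝ} (ht : t ∈ Icc 0 1) :
    HasDerivWithinAt (fun t : ℝ ↦ f (lineMap a x t))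
      (fderivWithin ℝ f s (lineMap a x t) (x - a)) (Icc 0 1) t :=
  have hmaps := mapsTo_lineMap_of_starConvex hs hx
  (hf _ (hmaps ht)).hasFDerivWithinAt.comp_hasDerivWithinAt t hasDerivWithinAt_lineMap hmaps

theorem norm_taylor_one_remainder_le_of_norm_iteratedFDerivWithin_le {C : ℝ}
    (hs : StarConvex ℝ a s) (hu : UniqueDiffOn ℝ s) (hf : ContDiffOn ℝ 2 f s) (hx : x ∈ s)
    (bound : ∀ y ∈ s, ‖iteratedFDerivWithin ℝ 2 f s y ![x - a, x - a]‖ ≤ C) :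
    ‖f x - f a - fderivWithin ℝ f s a (x - a)‖ ≤ C / 2 := by
  have hDf : DifferentiableOn ℝ (fderivWithin ℝ f s) s :=
    (hf.fderivWithin hu (m := 1) (by norm_num)).differentiableOn one_ne_zero
  have hsecond : ∀ t ∈ Icc (0 : ℝ) 1,
      HasDerivWithinAt (fun t : ℝ ↦ fderivWithin ℝ f s (lineMap a x t) (x - a))
        (iteratedFDerivWithin ℝ 2 f s (lineMap a x t) ![x - a, x - a]) (Icc 0 1) t := by
    intro t ht
    rw [iteratedFDerivWithin_two_apply _ hu (mapsTo_lineMap_of_starConvex hs hx ht)]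
    simpa using (hasDerivWithinAt_comp_lineMap hs hDf hx ht).clm_apply
      (hasDerivWithinAt_const t _ (x - a))
  simpa using norm_taylor_one_remainder_le_of_norm_second_deriv_le
    (fun _ ht ↦ hasDerivWithinAt_comp_lineMap hs (hf.differentiableOn two_ne_zero) hx ht) hsecond
    (fun _ ht ↦ bound _ (mapsTo_lineMap_of_starConvex hs hx (Ico_subset_Icc_self ht)))
    1 (right_mem_Icc.2 zero_le_one)

theorem norm_multilinear_diag_le_of_unit {ι : Type*} [Fintype ι] [Nonempty ι]
    (Q : MultilinearMap ℝ (fun _ : ι ↦ E) F) {C : ℝ}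
    (hQ : ∀ v : E, ‖v‖ = 1 → ‖Q fun _ ↦ v‖ ≤ C) (v : E) :
    ‖Q fun _ ↦ v‖ ≤ C * ‖v‖ ^ Fintype.card ι := by
  rcases eq_or_ne v 0 with rfl | hv
  · simp [Q.map_coord_zero (Classical.arbitrary ι)]
  calc ‖Q fun _ ↦ v‖ = ‖Q fun _ ↦ ‖v‖ • ‖v‖⁻¹ • v‖ := by
        simp only [smul_inv_smul₀ (norm_ne_zero_iff.2 hv)]
    _ = ‖Q fun _ ↦ ‖v‖⁻¹ • v‖ * ‖v‖ ^ Fintype.card ι := by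
        rw [Q.map_smul_univ (fun _ ↦ ‖v‖), norm_smul, mul_comm]
        simp
    _ ≤ C * ‖v‖ ^ Fintype.card ι := by
        gcongr
        exact hQ _ (norm_smul_inv_norm (𝕜 := ℝ) hv)

theorem height_function_bound_general {K L : ℝ} (hK : 0 ≤ K) {h : E → F}
    (hs : StarConvex ℝ 0 s) (hu : UniqueDiffOn ℝ s) (hcd : ContDiffOn ℝ 2 h s)
    (h0 : h 0 = 0) (hD0 : fderivWithin ℝ h s 0 = 0)
    (hD : ∀ x ∈ s, ‖fderivWithin ℝ h s x‖ ≤ L)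
    (hD2 : ∀ x ∈ s, ∀ v : E, ‖v‖ = 1 → ‖iteratedFDerivWithin ℝ 2 h s x ![v, v]‖
      ≤ K * (1 + ‖fderivWithin ℝ h s x‖ ^ 2) ^ (3 / 2 : ℝ)) :
    ∀ x ∈ s, ‖h x‖ ≤ K * ((1 + L ^ 2) ^ (3 / 2 : ℝ) / 2) * ‖x‖ ^ 2 := by
  intro x hx
  have diag (v : E) : ![v, v] = fun _ ↦ v := by ext i; fin_cases i <;> rfl
  have second_deriv_bound : ∀ y ∈ s, ‖iteratedFDerivWithin ℝ 2 h s y ![x - 0, x - 0]‖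
      ≤ K * (1 + L ^ 2) ^ (3 / 2 : ℝ) * ‖x‖ ^ 2 := by
    intro y hy
    have unit_bound (v : E) (hv : ‖v‖ = 1) : ‖iteratedFDerivWithin ℝ 2 h s y fun _ ↦ v‖
        ≤ K * (1 + L ^ 2) ^ (3 / 2 : ℝ) :=
      diag v ▸ (hD2 y hy v hv).trans (by gcongr; exact hD y hy)
    rw [sub_zero, diag]
    exact norm_multilinear_diag_le_of_unit
      (iteratedFDerivWithin ℝ 2 h s y).toMultilinearMap unit_bound x
  calc ‖h x‖ ≤ K * (1 + L ^ 2) ^ (3 / 2 : ℝ) * ‖x‖ ^ 2 / 2 := by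
        simpa [h0, hD0] using norm_taylor_one_remainder_le_of_norm_iteratedFDerivWithin_le
          hs hu hcd hx second_deriv_bound
    _ = K * ((1 + L ^ 2) ^ (3 / 2 : ℝ) / 2) * ‖x‖ ^ 2 := by ring

end

theorem one_add_tan_sq_rpow_three_halves {θ : ℝ} (hθ : 0 < Real.cos θ) :
    (1 + Real.tan θ ^ 2) ^ (3 / 2 : ℝ) = (Real.cos θ ^ 3)⁻¹ := by
  have hsec : 1 + Real.tan θ ^ 2 = (Real.cos θ)⁻¹ ^ (2 : ℝ) := by
    rw [Real.rpow_two, inv_pow, ← Real.inv_one_add_tan_sq hθ.ne', inv_inv]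
  rw [hsec, ← Real.rpow_mul (by positivity), show (2 : ℝ) * (3 / 2) = 3 by norm_num,
    Real.rpow_ofNat, inv_pow]

theorem one_add_tan_half_sq_rpow_le_two :
    (1 + Real.tan (1 / 2) ^ 2) ^ (3 / 2 : ℝ) ≤ 2 := by
  have hcos : 7 / 8 ≤ Real.cos (1 / 2) :=
    le_of_eq_of_le (by norm_num) Real.one_sub_sq_div_two_le_cos
  calc (1 + Real.tan (1 / 2) ^ 2) ^ (3 / 2 : ℝ) = (Real.cos (1 / 2) ^ 3)⁻¹ :=
        one_add_tan_sq_rpow_three_halves (by linarith)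
    _ ≤ ((7 / 8) ^ 3)⁻¹ := by gcongr
    _ ≤ 2 := by norm_num

/-- Graph form of the normal-component estimate: if `h` is `C²` on the
closed ball of radius `ε`, vanishes to first order at `0`, has gradient bounded by
`tan(1/2)`, and its second directional derivatives satisfy the normal-curvature bound
`|D²h(x)(v,v)| ≤ K(1 + ‖Dh(x)‖²)^{3/2}` for unit vectors `v`, then `|h(x)| ≤ K‖x‖²`. -/
theorem height_function_bound (K ε : ℝ) (hK : 0 < K) (hε : 0 < ε)
    (h : EuclideanSpace ℝ (Fin 2) → ℝ)
    (hcd : ContDiffOn ℝ 2 h (Metric.closedBall 0 ε))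
    (h0 : h 0 = 0)
    (hD0 : fderivWithin ℝ h (Metric.closedBall 0 ε) 0 = 0)
    (hD : ∀ x ∈ Metric.closedBall (0 : EuclideanSpace ℝ (Fin 2)) ε,
      ‖fderivWithin ℝ h (Metric.closedBall 0 ε) x‖ ≤ Real.tan (1 / 2))
    (hD2 : ∀ x ∈ Metric.closedBall (0 : EuclideanSpace ℝ (Fin 2)) ε,
      ∀ v : EuclideanSpace ℝ (Fin 2), ‖v‖ = 1 →
        |iteratedFDerivWithin ℝ 2 h (Metric.closedBall 0 ε) x ![v, v]|
          ≤ K * (1 + ‖fderivWithin ℝ h (Metric.closedBall 0 ε) x‖ ^ 2) ^ ((3 : ℝ) / 2)) :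
    ∀ x ∈ Metric.closedBall (0 : EuclideanSpace ℝ (Fin 2)) ε, |h x| ≤ K * ‖x‖ ^ 2 := by
  have hu : UniqueDiffOn ℝ (Metric.closedBall (0 : EuclideanSpace ℝ (Fin 2)) ε) :=
    uniqueDiffOn_convex (convex_closedBall 0 ε) ⟨0, by simp [interior_closedBall _ hε.ne', hε]⟩
  have hs : StarConvex ℝ 0 (Metric.closedBall (0 : EuclideanSpace ℝ (Fin 2)) ε) :=
    (convex_closedBall 0 ε).starConvex (Metric.mem_closedBall_self hε.le)
  intro x hx
  calc |h x| ≤ K * ((1 + Real.tan (1 / 2) ^ 2) ^ (3 / 2 : ℝ) / 2) * ‖x‖ ^ 2 :=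
        height_function_bound_general hK.le hs hu hcd h0 hD0 hD hD2 x hx
    _ ≤ K * (2 / 2) * ‖x‖ ^ 2 := by gcongr; exact one_add_tan_half_sq_rpow_le_two
    _ = K * ‖x‖ ^ 2 := by ring
end
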